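/- arXiv:2103.14246 — 3 statements merged into one kernel-verified Lean document; each statement's English description precedes it below -/
import Mathlib

section
/- Suppose the value-function approximation Ṽ is quadratic, i.e., Ṽ(x) = c + ⟨b, x⟩ + ½⟨x, A x⟩ with A symmetric. Let Z̃ := Σ(X)ᵀ∇Ṽ(X') and define the Euler–Maruyama estimator ΔŶ^em := −L(X) + ⟨Z̃, W⟩. Then its residual error satisfies, almost surely, ΔY − ΔŶ^em = δ^Ṽ − E[δ^Ṽ | 𝒢] + ⟨Z̄ − Z̃, W⟩ + ½ tr(M̄ (W Wᵀ − I)). -/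
open MeasureTheory ProbabilityTheory Matrix

/-- The standard Gaussian measure on `ℝⁿ` (coordinates i.i.d. `N(0,1)`). -/
noncomputable def stdGaussian (n : ℕ) : Measure (Fin n → ℝ) :=
  Measure.pi fun _ => gaussianReal 0 1

/-- The gradient of `f : ℝⁿ → ℝ`, as a vector of partial derivatives. -/
noncomputable def grad {n : ℕ} (f : (Fin n → ℝ) → ℝ) (x : Fin n → ℝ) : Fin n → ℝ :=
  fun i => fderiv ℝ f x (Pi.single i 1)

/-- The Hessian matrix of `f : ℝⁿ → ℝ`. -/
noncomputable def hess {n : ℕ} (f : (Fin n → ℝ) → ℝ) (x : Fin n → ℝ) :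
    Matrix (Fin n) (Fin n) ℝ :=
  Matrix.of fun i j => fderiv ℝ (fun y => fderiv ℝ f y (Pi.single j 1)) x (Pi.single i 1)

lemma aux_freeze {Ω β γ : Type*} [mΩ : MeasurableSpace Ω] [mβ : MeasurableSpace β]
    [MeasurableSpace γ] [StandardBorelSpace γ] [Nonempty γ]
    (P : Measure Ω) [IsProbabilityMeasure P] (Y : Ω → β) (hY : Measurable Y)
    (W : Ω → γ) (hW : Measurable W) (hi : IndepFun Y W P)
    (f : β × γ → ℝ) (hf : Measurable f) (hint : Integrable (fun ω => f (Y ω, W ω)) P) :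
    P[fun ω => f (Y ω, W ω) | mβ.comap Y] =ᵐ[P] fun ω => ∫ w, f (Y ω, w) ∂(P.map W) := by
  have h1 := condExp_prod_ae_eq_integral_condDistrib hY hW.aemeasurable hf.stronglyMeasurable hint
  have h2 : condDistrib W Y P =ᵐ[P.map Y] Kernel.const β (P.map W) := by
    have : IsProbabilityMeasure (P.map W) := Measure.isProbabilityMeasure_map hW.aemeasurable
    refine condDistrib_ae_eq_of_measure_eq_compProd Y hW.aemeasurable ?_
    rw [Measure.compProd_const]
    exact (indepFun_iff_map_prod_eq_prod_map_map hY.aemeasurable hW.aemeasurable).1 hi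
  have h3 := ae_of_ae_map hY.aemeasurable h2
  filter_upwards [h1, h3] with ω a1 a3
  rw [a1, a3]; simp

lemma aux_freeze' {Ω γ : Type*} (𝒢 : MeasurableSpace Ω) [mΩ : MeasurableSpace Ω] (h𝒢 : 𝒢 ≤ mΩ)
    [mγ : MeasurableSpace γ] [StandardBorelSpace γ] [Nonempty γ]
    (P : Measure Ω) [IsProbabilityMeasure P]
    (W : Ω → γ) (hW : Measurable W) (hi : Indep (mγ.comap W) 𝒢 P)
    {δ : Type*} [MeasurableSpace δ] (X : Ω → δ) (hX : Measurable[𝒢] X)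
    (f : δ × γ → ℝ) (hf : Measurable f) (hint : Integrable (fun ω => f (X ω, W ω)) P) :
    P[fun ω => f (X ω, W ω) | 𝒢] =ᵐ[P] fun ω => ∫ w, f (X ω, w) ∂(P.map W) := by
  have hid : @Measurable Ω Ω mΩ 𝒢 id := measurable_id'' h𝒢
  have hi' : @IndepFun Ω Ω γ mΩ 𝒢 mγ id W P := by
    have := hi.symm
    refine (@IndepFun_iff_Indep Ω Ω γ mΩ 𝒢 mγ id W P).2 ?_
    rw [MeasurableSpace.comap_id]
    exact this
  have hff : @Measurable (Ω × γ) ℝ (@Prod.instMeasurableSpace _ _ 𝒢 mγ) _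
      (fun p => f (X p.1, p.2)) := by
    refine hf.comp ?_
    exact Measurable.prodMk (hX.comp (@measurable_fst _ _ 𝒢 mγ)) (@measurable_snd _ _ 𝒢 mγ)
  have := @aux_freeze Ω Ω γ mΩ 𝒢 _ _ _ P _ id hid W hW hi' (fun p => f (X p.1, p.2)) hff hint
  rw [MeasurableSpace.comap_id] at this
  exact this

lemma aux_int1 {n : ℕ} (i : Fin n) :
    Integrable (fun w : Fin n → ℝ => w i) (_root_.stdGaussian n) ∧
      ∫ w, w i ∂(_root_.stdGaussian n) = 0 := by
  unfold _root_.stdGaussian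
  constructor
  · exact integrable_comp_eval (f := id) ((memLp_id_gaussianReal' 1 (by simp)).integrable le_rfl)
  · refine (integral_comp_eval (μ := fun _ : Fin n => gaussianReal 0 1) (i := i)
      (f := fun x : ℝ => x) (by fun_prop)).trans ?_
    exact integral_id_gaussianReal

lemma aux_int2 {n : ℕ} (i j : Fin n) :
    Integrable (fun w : Fin n → ℝ => w i * w j) (_root_.stdGaussian n) ∧
      ∫ w, w i * w j ∂(_root_.stdGaussian n) = if i = j then 1 else 0 := by
  have hm : ∀ k : Fin n, MemLp (fun w : Fin n → ℝ => w k) 2 (_root_.stdGaussian n) := by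
    intro k
    exact (memLp_id_gaussianReal' 2 (by simp)).comp_measurePreserving (measurePreserving_eval _ k)
  refine ⟨(hm i).integrable_mul (hm j), ?_⟩
  split_ifs with h
  · subst h
    have hv := variance_id_gaussianReal (μ := 0) (v := 1)
    rw [variance_eq_integral (by fun_prop)] at hv
    unfold _root_.stdGaussian
    refine (integral_comp_eval (μ := fun _ : Fin n => gaussianReal 0 1) (i := i)
      (f := fun x : ℝ => x * x) (by fun_prop)).trans ?_
    simpa [pow_two] using hv
  · have hind := (iIndepFun_pi (μ := fun _ : Fin n => gaussianReal 0 1) (X := fun _ => id)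
      (fun i => by fun_prop)).indepFun h
    have := hind.integral_fun_mul_eq_mul_integral (hm i).1 (hm j).1
    refine this.trans ?_
    have h0 := (aux_int1 i).2
    unfold _root_.stdGaussian at h0
    simp [h0]

lemma aux_grad {n : ℕ} (Vt : (Fin n → ℝ) → ℝ) (c : ℝ) (b : Fin n → ℝ)
    (A : Matrix (Fin n) (Fin n) ℝ) (hA : A.IsSymm)
    (hVt : ∀ x, Vt x = c + (∑ i, b i * x i) + (1 / 2) * ∑ i, x i * A.mulVec x i)
    (x v : Fin n → ℝ) : Vt (x + v) = Vt x + (b + A *ᵥ x) ⬝ᵥ v + 1 / 2 * (v ⬝ᵥ A *ᵥ v) := by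
  have hVt' : ∀ x, Vt x = c + b ⬝ᵥ x + 1 / 2 * (x ⬝ᵥ A *ᵥ x) := hVt
  have h : x ⬝ᵥ A *ᵥ v = (A *ᵥ x) ⬝ᵥ v := by
    rw [dotProduct_mulVec, ← mulVec_transpose, hA.eq]
  have h' : v ⬝ᵥ A *ᵥ x = (A *ᵥ x) ⬝ᵥ v := dotProduct_comm _ _
  simp only [hVt', mulVec_add, dotProduct_add, add_dotProduct, h, h']
  ring

lemma aux_fderiv {n : ℕ} (Vt : (Fin n → ℝ) → ℝ) (c : ℝ) (b : Fin n → ℝ)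
    (A : Matrix (Fin n) (Fin n) ℝ) (hA : A.IsSymm)
    (hVt : ∀ x, Vt x = c + (∑ i, b i * x i) + (1 / 2) * ∑ i, x i * A.mulVec x i)
    (x v : Fin n → ℝ) : fderiv ℝ Vt x v = (b + A *ᵥ x) ⬝ᵥ v := by
  have hd : DifferentiableAt ℝ Vt x := by
    rw [show Vt = _ from funext hVt]
    simp only [mulVec, dotProduct]
    fun_prop
  rw [← hd.lineDeriv_eq_fderiv, lineDeriv]
  have : (fun t : ℝ => Vt (x + t • v)) = fun t =>
      Vt x + t * ((b + A *ᵥ x) ⬝ᵥ v) + t ^ 2 * (1 / 2 * (v ⬝ᵥ A *ᵥ v)) := by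
    funext t
    rw [aux_grad Vt c b A hA hVt]
    simp only [mulVec_smul, dotProduct_smul, smul_dotProduct, smul_eq_mul]
    ring
  rw [this]
  have h : HasDerivAt (fun t : ℝ => Vt x + t * ((b + A *ᵥ x) ⬝ᵥ v)
      + t ^ 2 * (1 / 2 * (v ⬝ᵥ A *ᵥ v))) _ 0 :=
    (((hasDerivAt_id (0 : ℝ)).mul_const ((b + A *ᵥ x) ⬝ᵥ v)).const_add (Vt x)).add
      ((hasDerivAt_pow 2 (0 : ℝ)).mul_const (1 / 2 * (v ⬝ᵥ A *ᵥ v)))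
  rw [h.deriv]; simp

lemma aux_hess {n : ℕ} (Vt : (Fin n → ℝ) → ℝ) (c : ℝ) (b : Fin n → ℝ)
    (A : Matrix (Fin n) (Fin n) ℝ) (hA : A.IsSymm)
    (hVt : ∀ x, Vt x = c + (∑ i, b i * x i) + (1 / 2) * ∑ i, x i * A.mulVec x i)
    (x : Fin n → ℝ) : hess Vt x = A := by
  ext i j
  simp only [hess, Matrix.of_apply, aux_fderiv Vt c b A hA hVt]
  have h1 : (fun y : Fin n → ℝ => (b + A *ᵥ y) ⬝ᵥ Pi.single j 1) =
      fun y => b j + (Matrix.mulVecLin A).toContinuousLinearMap y j := by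
    funext y; simp
  rw [h1, fderiv_const_add]
  have h2 : HasFDerivAt (fun y => (Matrix.mulVecLin A).toContinuousLinearMap y j)
      ((ContinuousLinearMap.proj (R := ℝ) (φ := fun _ : Fin n => ℝ) j).comp
        (Matrix.mulVecLin A).toContinuousLinearMap) x :=
    ((ContinuousLinearMap.proj (R := ℝ) (φ := fun _ : Fin n => ℝ) j).comp
        (Matrix.mulVecLin A).toContinuousLinearMap).hasFDerivAt
  rw [h2.fderiv]
  simp [← hA.apply i j]

lemma aux_Vint {n : ℕ} (a : ℝ) (z : Fin n → ℝ) (M : Matrix (Fin n) (Fin n) ℝ) :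
    ∫ w, (a + z ⬝ᵥ w + 1 / 2 * (w ⬝ᵥ M *ᵥ w)) ∂(_root_.stdGaussian n) =
      a + 1 / 2 * M.trace := by
  have : IsProbabilityMeasure (_root_.stdGaussian n) := by
    unfold _root_.stdGaussian; infer_instance
  have e : ∀ w : Fin n → ℝ, w ⬝ᵥ M *ᵥ w = ∑ i, ∑ j, M i j * (w i * w j) := by
    intro w
    simp only [dotProduct, mulVec, Finset.mul_sum]
    refine Finset.sum_congr rfl fun i _ => Finset.sum_congr rfl fun j _ => by ring
  simp only [e]
  have i1 : ∀ i, Integrable (fun w : Fin n → ℝ => z i * w i) (_root_.stdGaussian n) :=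
    fun i => (aux_int1 i).1.const_mul _
  have i2 : ∀ i j, Integrable (fun w : Fin n → ℝ => M i j * (w i * w j)) (_root_.stdGaussian n) :=
    fun i j => (aux_int2 i j).1.const_mul _
  have i2' : ∀ i, Integrable (fun w : Fin n → ℝ => ∑ j, M i j * (w i * w j))
      (_root_.stdGaussian n) :=
    fun i => integrable_finsetSum _ fun j _ => i2 i j
  have i1s : Integrable (fun w : Fin n → ℝ => z ⬝ᵥ w) (_root_.stdGaussian n) :=
    integrable_finsetSum _ fun j _ => i1 j
  have i0 : Integrable (fun w : Fin n → ℝ => a + z ⬝ᵥ w) (_root_.stdGaussian n) :=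
    (integrable_const a).add i1s
  rw [integral_add i0
    ((integrable_finsetSum _ fun i _ => i2' i).const_mul _),
    integral_add (integrable_const a) i1s, integral_const_mul,
    integral_finsetSum _ (fun i _ => i2' i)]
  have : ∫ w, z ⬝ᵥ w ∂(_root_.stdGaussian n) = 0 := by
    simp only [dotProduct]
    rw [integral_finsetSum _ (fun i _ => i1 i)]
    simp [integral_const_mul, (aux_int1 _).2]
  rw [this]
  have h2 : ∀ i, ∫ w, ∑ j, M i j * (w i * w j) ∂(_root_.stdGaussian n) = M i i := by
    intro i
    rw [integral_finsetSum _ (fun j _ => i2 i j)]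
    simp [integral_const_mul, (aux_int2 _ _).2]
  simp [h2, Matrix.trace]

/-- **Residual error of the Euler–Maruyama estimator under a quadratic approximation.**
If the value-function approximation `Ṽ` is quadratic, `Ṽ(x) = c + ⟨b,x⟩ + ½⟨x,Ax⟩` with `A`
symmetric, `Z̃ := Σ(X)ᵀ∇Ṽ(X')`, and `ΔŶ^em := −L(X) + ⟨Z̃,W⟩` is the Euler–Maruyama estimator,
then almost surely
`ΔY − ΔŶ^em = δ^Ṽ − E[δ^Ṽ|𝒢] + ⟨Z̄ − Z̃, W⟩ + ½ tr(M̄ (W Wᵀ − I))`. -/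
theorem euler_maruyama_residual_quadratic
    {Ω : Type*} (𝒢 : MeasurableSpace Ω) [mΩ : MeasurableSpace Ω]
    (P : Measure Ω) [IsProbabilityMeasure P]
    {n : ℕ} (h𝒢 : 𝒢 ≤ mΩ)
    -- the noise W : i.i.d. standard normal coordinates, independent of 𝒢
    (W : Ω → Fin n → ℝ) (hWmeas : Measurable W)
    (hWlaw : Measure.map W P = stdGaussian n)
    (hWindep : Indep (MeasurableSpace.comap W inferInstance) 𝒢 P)
    -- the current state X is 𝒢-measurable; dynamics data F, Σ, L
    (X : Ω → Fin n → ℝ) (hX : Measurable[𝒢] X)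
    (F : (Fin n → ℝ) → Fin n → ℝ) (hF : Measurable F)
    (S : (Fin n → ℝ) → Matrix (Fin n) (Fin n) ℝ) (hS : ∀ i j, Measurable fun x => S x i j)
    (L : (Fin n → ℝ) → ℝ) (hL : Measurable L)
    -- X̄ := X + F(X), X' := X̄ + Σ(X) W
    (Xb : Ω → Fin n → ℝ) (hXb : ∀ ω, Xb ω = X ω + F (X ω))
    (X' : Ω → Fin n → ℝ) (hX' : ∀ ω, X' ω = Xb ω + (S (X ω)).mulVec (W ω))
    -- the next-step value function V' and the one-step Bellman value V
    (V' : (Fin n → ℝ) → ℝ) (hV'meas : Measurable V')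
    (hV'int : Integrable (fun ω => V' (X' ω)) P)
    (V : (Fin n → ℝ) → ℝ)
    (hV : ∀ x, V x = L x + ∫ w, V' (x + F x + (S x).mulVec w) ∂(stdGaussian n))
    -- the quadratic value function approximation Ṽ(x) = c + ⟨b,x⟩ + ½⟨x,Ax⟩, A symmetric
    (Vt : (Fin n → ℝ) → ℝ)
    (c : ℝ) (b : Fin n → ℝ) (A : Matrix (Fin n) (Fin n) ℝ) (hA : A.IsSymm)
    (hVtquad : ∀ x, Vt x = c + (∑ i, b i * x i) + (1 / 2) * ∑ i, x i * A.mulVec x i)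
    (hVtint : Integrable (fun ω => Vt (X' ω)) P)
    -- the associated Z̄, M̄ and the Euler–Maruyama gradient term Z̃ := Σ(X)ᵀ∇Ṽ(X')
    (Zb : Ω → Fin n → ℝ) (hZb : ∀ ω, Zb ω = (S (X ω))ᵀ.mulVec (grad Vt (Xb ω)))
    (Mb : Ω → Matrix (Fin n) (Fin n) ℝ)
    (hMb : ∀ ω, Mb ω = (S (X ω))ᵀ * hess Vt (Xb ω) * S (X ω))
    (Zt : Ω → Fin n → ℝ) (hZt : ∀ ω, Zt ω = (S (X ω))ᵀ.mulVec (grad Vt (X' ω)))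
    (hZbint : ∀ i, Integrable (fun ω => Zb ω i) P)
    (hMbint : ∀ i j, Integrable (fun ω => Mb ω i j) P)
    (hZtint : ∀ i, Integrable (fun ω => Zt ω i) P)
    -- the representation error δ^Ṽ
    (δVt : Ω → ℝ) (hδVt : ∀ ω, δVt ω = V' (X' ω) - Vt (X' ω))
    -- the true backward difference ΔY and the Euler–Maruyama estimator ΔŶ^em
    (ΔY : Ω → ℝ) (hΔY : ∀ ω, ΔY ω = V' (X' ω) - V (X ω))
    (ΔYem : Ω → ℝ)
    (hΔYem : ∀ ω, ΔYem ω = -L (X ω) + ∑ i, Zt ω i * W ω i)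
    -- integrability of all displayed random variables
    (hΔYint : Integrable ΔY P) (hΔYemint : Integrable ΔYem P)
    (hδVtint : Integrable δVt P)
    (hLint : Integrable (fun ω => L (X ω)) P)
    (hVint : Integrable (fun ω => V (X ω)) P) :
    (fun ω => ΔY ω - ΔYem ω) =ᵐ[P]
      (fun ω => δVt ω - (P[δVt|𝒢]) ω + (∑ i, (Zb ω i - Zt ω i) * W ω i)
        + (1 / 2) * Matrix.trace (Mb ω * (Matrix.vecMulVec (W ω) (W ω) - 1))) := by
  have hexp := aux_grad Vt c b A hA hVtquad
  have hgrad : ∀ x, grad Vt x = b + A *ᵥ x := by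
    intro x; funext i
    simp [grad, aux_fderiv Vt c b A hA hVtquad]
  have hhess := aux_hess Vt c b A hA hVtquad
  have hq : ∀ (x w : Fin n → ℝ) (T : Matrix (Fin n) (Fin n) ℝ), Vt (x + T *ᵥ w) =
      Vt x + (Tᵀ *ᵥ grad Vt x) ⬝ᵥ w + 1 / 2 * (w ⬝ᵥ (Tᵀ * hess Vt x * T) *ᵥ w) := by
    intro x w T
    have e1 : (b + A *ᵥ x) ⬝ᵥ T *ᵥ w = (Tᵀ *ᵥ (b + A *ᵥ x)) ⬝ᵥ w := by
      rw [dotProduct_mulVec, ← mulVec_transpose]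
    have e2 : (T *ᵥ w) ⬝ᵥ A *ᵥ (T *ᵥ w) = w ⬝ᵥ (Tᵀ * A * T) *ᵥ w := by
      rw [dotProduct_comm, dotProduct_mulVec, ← mulVec_transpose, dotProduct_comm]
      simp only [mulVec_mulVec, Matrix.mul_assoc]
    rw [hexp, hgrad, hhess, e1, e2]
  have hVtm : Measurable Vt := by
    rw [show Vt = _ from funext hVtquad]
    simp only [mulVec, dotProduct]
    fun_prop
  have hg : Measurable (fun p : (Fin n → ℝ) × (Fin n → ℝ) => p.1 + F p.1 + S p.1 *ᵥ p.2) := by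
    refine (measurable_fst.add (hF.comp measurable_fst)).add (measurable_pi_lambda _ fun i => ?_)
    simp only [mulVec, dotProduct]
    refine Finset.measurable_sum _ fun j _ => ?_
    exact ((hS i j).comp measurable_fst).mul (by fun_prop)
  have hX'2 : ∀ ω, X' ω = X ω + F (X ω) + S (X ω) *ᵥ W ω := fun ω => by rw [hX', hXb]
  have c1 := aux_freeze' 𝒢 h𝒢 P W hWmeas hWindep X hX
    (fun p => V' (p.1 + F p.1 + S p.1 *ᵥ p.2)) (hV'meas.comp hg)
    (by simpa only [hX'2] using hV'int)
  have c2 := aux_freeze' 𝒢 h𝒢 P W hWmeas hWindep X hX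
    (fun p => Vt (p.1 + F p.1 + S p.1 *ᵥ p.2)) (hVtm.comp hg)
    (by simpa only [hX'2] using hVtint)
  have c3 := condExp_sub hV'int hVtint 𝒢
  have hδ : δVt = (fun ω => V' (X' ω)) - fun ω => Vt (X' ω) := by
    funext ω; simp [hδVt]
  rw [← hδ] at c3
  simp only [← hX'2, hWlaw] at c1 c2
  filter_upwards [c1, c2, c3] with ω a1 a2 a3
  rw [a3, Pi.sub_apply, a1, a2]
  simp only [hq, aux_Vint, ← hXb, ← hZb, ← hMb]
  rw [hΔY, hΔYem, hδVt, hV]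
  have ht : Matrix.trace (Mb ω * (Matrix.vecMulVec (W ω) (W ω) - 1)) =
      W ω ⬝ᵥ Mb ω *ᵥ W ω - (Mb ω).trace := by
    rw [Matrix.mul_sub, Matrix.mul_one, Matrix.trace_sub, Matrix.mul_vecMulVec,
      Matrix.trace_vecMulVec, dotProduct_comm]
  have hs : ∑ i, (Zb ω i - Zt ω i) * W ω i = Zb ω ⬝ᵥ W ω - ∑ i, Zt ω i * W ω i := by
    simp [dotProduct, sub_mul, Finset.sum_sub_distrib]
  have hVX : Vt (X' ω) = Vt (Xb ω) + Zb ω ⬝ᵥ W ω + 1 / 2 * (W ω ⬝ᵥ Mb ω *ᵥ W ω) := by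
    rw [hX', hq, ← hZb, ← hMb]
  rw [ht, hs, hVX, hXb]
  ring
end

section
/- With the one-step Bellman setup, define the re-estimate estimator Ŷ^re-est := Ṽ(X') − ΔŶ and the noiseless estimator Ŷ^noiseless := L(X) + Ȳ + ½ tr(M̄). Then their biases satisfy, almost surely, E[V(X) − Ŷ^re-est | 𝒢] = E[δ^Ṽ | 𝒢] and E[V(X) − Ŷ^noiseless | 𝒢] = E[δ^Ṽ + δ^hot | 𝒢]. -/
open MeasureTheory ProbabilityTheory Matrix

open MeasureTheory ProbabilityTheory Matrix

theorem aux_fubini {Ω E G : Type*} {mΩ : MeasurableSpace Ω} [MeasurableSpace E] [MeasurableSpace G]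
    (P : Measure Ω) [IsProbabilityMeasure P] (γ : Measure G) (W : Ω → G) (hW : Measurable W)
    (hlaw : Measure.map W P = γ) (Y : Ω → E) (hY : Measurable Y) (hind : IndepFun Y W P)
    (h : E × G → ℝ) (hh : Measurable h) (hint : Integrable (fun ω => h (Y ω, W ω)) P) :
    Integrable (fun ω => ∫ w, h (Y ω, w) ∂γ) P ∧
    ∫ ω, h (Y ω, W ω) ∂P = ∫ ω, ∫ w, h (Y ω, w) ∂γ ∂P := by
  have hm := (indepFun_iff_map_prod_eq_prod_map_map hY.aemeasurable hW.aemeasurable).1 hind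
  rw [hlaw] at hm
  have hγ : IsProbabilityMeasure γ := hlaw ▸ Measure.isProbabilityMeasure_map hW.aemeasurable
  have hPY : IsProbabilityMeasure (P.map Y) := Measure.isProbabilityMeasure_map hY.aemeasurable
  have hYW : Measurable (fun ω => (Y ω, W ω)) := hY.prodMk hW
  have hI : Integrable h ((P.map Y).prod γ) := by
    rw [← hm]
    exact (integrable_map_measure hh.aestronglyMeasurable hYW.aemeasurable).2 hint
  have hs : StronglyMeasurable (fun x => ∫ w, h (x, w) ∂γ) :=
    hh.stronglyMeasurable.integral_prod_right'
  constructor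
  · exact (integrable_map_measure hs.aestronglyMeasurable hY.aemeasurable).1 hI.integral_prod_left
  · rw [← integral_map (φ := fun ω => (Y ω, W ω)) hYW.aemeasurable hh.aestronglyMeasurable, hm,
      integral_prod _ hI, integral_map hY.aemeasurable hs.aestronglyMeasurable]

theorem aux_condExp {Ω E G : Type*} {m mΩ : MeasurableSpace Ω} [MeasurableSpace E]
    [MeasurableSpace G] (hm : m ≤ mΩ)
    (P : Measure Ω) [IsProbabilityMeasure P] (γ : Measure G) (W : Ω → G) (hW : Measurable W)
    (hlaw : Measure.map W P = γ) (hind : Indep (MeasurableSpace.comap W inferInstance) m P)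
    (X : Ω → E) (hX : Measurable[m] X)
    (f : E × G → ℝ) (hf : Measurable f) (hint : Integrable (fun ω => f (X ω, W ω)) P) :
    P[fun ω => f (X ω, W ω)|m] =ᵐ[P] fun ω => ∫ w, f (X ω, w) ∂γ := by
  have hγ : IsProbabilityMeasure γ := hlaw ▸ Measure.isProbabilityMeasure_map hW.aemeasurable
  have hXm : Measurable X := hX.mono hm le_rfl
  have hind' : ∀ {E' : Type _} [MeasurableSpace E'] (Y : Ω → E'), Measurable[m] Y →
      IndepFun Y W P := fun Y hY =>
    (IndepFun_iff_Indep _ _ _).2 (indep_of_indep_of_le_left hind.symm hY.comap_le)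
  have hI := (aux_fubini P γ W hW hlaw X hXm (hind' X hX) f hf hint).1
  refine (ae_eq_condExp_of_forall_setIntegral_eq hm hint (fun s _ _ => hI.integrableOn) ?_ ?_).symm
  · intro s hs _
    classical
    have hY : Measurable[m] (fun ω => (X ω, s.indicator (fun _ => (1:ℝ)) ω)) :=
      hX.prodMk (measurable_const.indicator hs)
    have e : ∀ (g : Ω → ℝ), ∫ ω in s, g ω ∂P = ∫ ω, s.indicator (fun _ => (1:ℝ)) ω * g ω ∂P := by
      intro g
      rw [← integral_indicator (hm s hs)]
      congr 1; ext ω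
      by_cases h : ω ∈ s <;> simp [h]
    have := (aux_fubini P γ W hW hlaw _ (hY.mono hm le_rfl)
      (IndepFun_iff_Indep _ _ _ |>.2 (indep_of_indep_of_le_left hind.symm hY.comap_le))
      (fun p => p.1.2 * f (p.1.1, p.2)) (by fun_prop) ?_).2
    · rw [e, e, this]
      simp only [integral_const_mul]
    · refine (hint.indicator (hm s hs)).congr (Filter.Eventually.of_forall fun ω => ?_)
      by_cases h : ω ∈ s <;> simp [h]
  · have hs : StronglyMeasurable (fun x => ∫ w, f (x, w) ∂γ) :=
      hf.stronglyMeasurable.integral_prod_right'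
    exact (hs.comp_measurable hX).aestronglyMeasurable

theorem aux_mul_zero {Ω G : Type*} {m mΩ : MeasurableSpace Ω} [MeasurableSpace G] (hm : m ≤ mΩ)
    (P : Measure Ω) [IsProbabilityMeasure P] (γ : Measure G) (W : Ω → G) (hW : Measurable W)
    (hlaw : Measure.map W P = γ) (hind : Indep (MeasurableSpace.comap W inferInstance) m P)
    (Z : Ω → ℝ) (hZ : Measurable[m] Z) (hZi : Integrable Z P)
    (g : G → ℝ) (hg : Measurable g) (hgi : Integrable g γ) (h0 : ∫ w, g w ∂γ = 0) :
    Integrable (fun ω => Z ω * g (W ω)) P ∧ P[fun ω => Z ω * g (W ω)|m] =ᵐ[P] 0 := by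
  have hgW : Integrable (fun ω => g (W ω)) P := by
    rw [← hlaw] at hgi
    exact (integrable_map_measure hg.aestronglyMeasurable hW.aemeasurable).1 hgi
  have hi : IndepFun Z W P :=
    (IndepFun_iff_Indep _ _ _).2 (indep_of_indep_of_le_left hind.symm hZ.comap_le)
  have hI : Integrable (fun ω => Z ω * g (W ω)) P :=
    (hi.comp measurable_id hg).integrable_mul hZi hgW
  refine ⟨hI, ?_⟩
  have := aux_condExp hm P γ W hW hlaw hind Z hZ (fun p => p.1 * g p.2) (by fun_prop) hI
  refine this.trans (Filter.Eventually.of_forall fun ω => ?_)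
  simp [integral_const_mul, h0]

theorem aux_gauss1 {n : ℕ} (i : Fin n) :
    Integrable (fun w : Fin n → ℝ => w i) (_root_.stdGaussian n) ∧
    ∫ w : Fin n → ℝ, w i ∂(_root_.stdGaussian n) = 0 := by
  unfold _root_.stdGaussian
  constructor
  · exact integrable_comp_eval (X := fun _ : Fin n => ℝ) (μ := fun _ : Fin n => gaussianReal 0 1) (i := i)
          (f := fun x : ℝ => x)
      ((memLp_id_gaussianReal 1).integrable (by simp))
  · rw [integral_comp_eval (X := fun _ : Fin n => ℝ) (μ := fun _ : Fin n => gaussianReal 0 1) (i := i)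
          (f := fun x : ℝ => x) (by fun_prop), integral_id_gaussianReal]

theorem aux_gauss2 {n : ℕ} (i j : Fin n) :
    Integrable (fun w : Fin n → ℝ => w i * w j - (1 : Matrix (Fin n) (Fin n) ℝ) i j)
      (_root_.stdGaussian n) ∧
    ∫ w : Fin n → ℝ, (w i * w j - (1 : Matrix (Fin n) (Fin n) ℝ) i j) ∂(_root_.stdGaussian n)
      = 0 := by
  have hp : IsProbabilityMeasure (_root_.stdGaussian n) := by
    unfold _root_.stdGaussian; infer_instance
  suffices h : Integrable (fun w : Fin n → ℝ => w i * w j) (_root_.stdGaussian n) ∧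
      ∫ w : Fin n → ℝ, w i * w j ∂(_root_.stdGaussian n) = (1 : Matrix (Fin n) (Fin n) ℝ) i j by
    refine ⟨h.1.sub (integrable_const _), ?_⟩
    rw [integral_sub h.1 (integrable_const _), h.2]; simp
  by_cases hij : i = j
  · subst hij
    unfold _root_.stdGaussian
    constructor
    · exact integrable_comp_eval (X := fun _ : Fin n => ℝ) (μ := fun _ : Fin n => gaussianReal 0 1) (i := i)
          (f := fun x : ℝ => x * x) (by
            simpa [sq] using (memLp_id_gaussianReal (μ := 0) (v := 1) 2).integrable_sq)
    · rw [integral_comp_eval (X := fun _ : Fin n => ℝ) (μ := fun _ : Fin n => gaussianReal 0 1) (i := i)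
          (f := fun x : ℝ => x * x) (by fun_prop)]
      have := variance_fun_id_gaussianReal (μ := 0) (v := 1)
      rw [variance_eq_integral (by fun_prop)] at this
      simpa [integral_id_gaussianReal, sq] using this
  · have hI : IndepFun (fun w : Fin n → ℝ => w i) (fun w => w j) (_root_.stdGaussian n) :=
      (iIndepFun_pi (μ := fun _ : Fin n => gaussianReal 0 1) (X := fun _ x => x)
        (fun _ => by fun_prop)).indepFun hij
    constructor
    · exact hI.integrable_mul (aux_gauss1 i).1 (aux_gauss1 j).1
    · rw [hI.integral_fun_mul_eq_mul_integral (aux_gauss1 i).1.1 (aux_gauss1 j).1.1, (aux_gauss1 i).2]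
      simp [hij]

/-- **Biases of the re-estimate and noiseless estimators.**
With the one-step Bellman setup, for `Ŷ^re-est := Ṽ(X') − ΔŶ` and
`Ŷ^noiseless := L(X) + Ȳ + ½ tr(M̄)`, almost surely
`E[V(X) − Ŷ^re-est | 𝒢] = E[δ^Ṽ | 𝒢]` and
`E[V(X) − Ŷ^noiseless | 𝒢] = E[δ^Ṽ + δ^hot | 𝒢]`. -/
theorem reestimate_noiseless_bias
    {Ω : Type*} (𝒢 : MeasurableSpace Ω) [mΩ : MeasurableSpace Ω]
    (P : Measure Ω) [IsProbabilityMeasure P]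
    {n : ℕ} (h𝒢 : 𝒢 ≤ mΩ)
    -- the noise W : i.i.d. standard normal coordinates, independent of 𝒢
    (W : Ω → Fin n → ℝ) (hWmeas : Measurable W)
    (hWlaw : Measure.map W P = stdGaussian n)
    (hWindep : Indep (MeasurableSpace.comap W inferInstance) 𝒢 P)
    -- the current state X is 𝒢-measurable; dynamics data F, Σ, L
    (X : Ω → Fin n → ℝ) (hX : Measurable[𝒢] X)
    (F : (Fin n → ℝ) → Fin n → ℝ) (hF : Measurable F)
    (S : (Fin n → ℝ) → Matrix (Fin n) (Fin n) ℝ) (hS : ∀ i j, Measurable fun x => S x i j)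
    (L : (Fin n → ℝ) → ℝ) (hL : Measurable L)
    -- X̄ := X + F(X), X' := X̄ + Σ(X) W
    (Xb : Ω → Fin n → ℝ) (hXb : ∀ ω, Xb ω = X ω + F (X ω))
    (X' : Ω → Fin n → ℝ) (hX' : ∀ ω, X' ω = Xb ω + (S (X ω)).mulVec (W ω))
    -- the next-step value function V' and the one-step Bellman value V
    (V' : (Fin n → ℝ) → ℝ) (hV'meas : Measurable V')
    (hV'int : Integrable (fun ω => V' (X' ω)) P)
    (V : (Fin n → ℝ) → ℝ)
    (hV : ∀ x, V x = L x + ∫ w, V' (x + F x + (S x).mulVec w) ∂(stdGaussian n))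
    -- the C² value function approximation Ṽ and associated Ȳ, Z̄, M̄
    (Vt : (Fin n → ℝ) → ℝ) (hVt : ContDiff ℝ 2 Vt)
    (hVtint : Integrable (fun ω => Vt (X' ω)) P)
    (Zb : Ω → Fin n → ℝ) (hZb : ∀ ω, Zb ω = (S (X ω))ᵀ.mulVec (grad Vt (Xb ω)))
    (Mb : Ω → Matrix (Fin n) (Fin n) ℝ)
    (hMb : ∀ ω, Mb ω = (S (X ω))ᵀ * hess Vt (Xb ω) * S (X ω))
    (hZbint : ∀ i, Integrable (fun ω => Zb ω i) P)
    (hMbint : ∀ i j, Integrable (fun ω => Mb ω i j) P)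
    -- the Taylor remainder δ^hot and the representation error δ^Ṽ
    (δhot : Ω → ℝ)
    (hδhot : ∀ ω, δhot ω = Vt (X' ω) - (Vt (Xb ω) + (∑ i, Zb ω i * W ω i)
      + (1 / 2) * ∑ i, W ω i * (Mb ω).mulVec (W ω) i))
    (δVt : Ω → ℝ) (hδVt : ∀ ω, δVt ω = V' (X' ω) - Vt (X' ω))
    -- the Taylor estimator ΔŶ
    (ΔYh : Ω → ℝ)
    (hΔYh : ∀ ω, ΔYh ω = -L (X ω) + (∑ i, Zb ω i * W ω i)
      + (1 / 2) * Matrix.trace (Mb ω * (Matrix.vecMulVec (W ω) (W ω) - 1)))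
    -- the re-estimate and noiseless estimators
    (Yre : Ω → ℝ) (hYre : ∀ ω, Yre ω = Vt (X' ω) - ΔYh ω)
    (Ynl : Ω → ℝ)
    (hYnl : ∀ ω, Ynl ω = L (X ω) + Vt (Xb ω) + (1 / 2) * Matrix.trace (Mb ω))
    -- integrability of all displayed random variables
    (hΔYhint : Integrable ΔYh P)
    (hYreint : Integrable Yre P) (hYnlint : Integrable Ynl P)
    (hδhotint : Integrable δhot P) (hδVtint : Integrable δVt P)
    (hLint : Integrable (fun ω => L (X ω)) P)
    (hVint : Integrable (fun ω => V (X ω)) P) :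
    P[fun ω => V (X ω) - Yre ω|𝒢] =ᵐ[P] P[δVt|𝒢] ∧
      P[fun ω => V (X ω) - Ynl ω|𝒢] =ᵐ[P] P[fun ω => δVt ω + δhot ω|𝒢] := by
  have hXbm : Measurable[𝒢] Xb := by
    have : Xb = (fun x => x + F x) ∘ X := funext hXb
    rw [this]
    exact (measurable_id.add hF).comp hX
  have hSm : ∀ i j, Measurable[𝒢] fun ω => S (X ω) i j := fun i j => (hS i j).comp hX
  have hd1 : ∀ j, ContDiff ℝ 1 (fun y => fderiv ℝ Vt y (Pi.single j 1)) := fun j =>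
    (hVt.fderiv_right (m := 1) (by norm_num)).clm_apply contDiff_const
  have hgm : ∀ i, Measurable[𝒢] fun ω => grad Vt (Xb ω) i := fun i =>
    ((hd1 i).continuous.measurable).comp hXbm
  have hhm : ∀ i j, Measurable[𝒢] fun ω => hess Vt (Xb ω) i j := fun i j => by
    have : Continuous fun y => hess Vt y i j :=
      ((hd1 j).continuous_fderiv (by norm_num)).clm_apply continuous_const
    exact this.measurable.comp hXbm
  have hZm : ∀ i, Measurable[𝒢] fun ω => Zb ω i := fun i => by
    simp only [hZb, Matrix.mulVec, dotProduct, Matrix.transpose_apply]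
    exact Finset.measurable_sum _ fun k _ => (hSm k i).mul (hgm k)
  have hMm : ∀ i j, Measurable[𝒢] fun ω => Mb ω i j := fun i j => by
    simp only [hMb, Matrix.mul_apply, Matrix.transpose_apply]
    exact Finset.measurable_sum _ fun k _ =>
      (Finset.measurable_sum _ fun l _ => (hSm l i).mul (hhm l k)).mul (hSm k j)
  -- the linear and quadratic parts
  have hlin := fun i => aux_mul_zero h𝒢 P _ W hWmeas hWlaw hWindep _ (hZm i) (hZbint i)
    (fun w => w i) (by fun_prop) (aux_gauss1 i).1 (aux_gauss1 i).2
  have hquad := fun i j => aux_mul_zero h𝒢 P _ W hWmeas hWlaw hWindep _ (hMm i j) (hMbint i j)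
    (fun w => w j * w i - (1 : Matrix (Fin n) (Fin n) ℝ) j i) (by fun_prop)
    (aux_gauss2 j i).1 (aux_gauss2 j i).2
  have hf : Measurable (fun p : (Fin n → ℝ) × (Fin n → ℝ) =>
      V' (p.1 + F p.1 + (S p.1).mulVec p.2)) := by
    refine hV'meas.comp ?_
    refine (measurable_fst.add (hF.comp measurable_fst)).add ?_
    refine measurable_pi_lambda _ fun i => ?_
    simp only [Matrix.mulVec, dotProduct]
    exact Finset.measurable_sum _ fun k _ =>
      ((hS i k).comp measurable_fst).mul ((measurable_pi_apply k).comp measurable_snd)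
  have hX'eq : ∀ ω, V' (X' ω) = V' (X ω + F (X ω) + (S (X ω)).mulVec (W ω)) := fun ω => by
    rw [hX', hXb]
  have hcV : P[fun ω => V' (X' ω)|𝒢] =ᵐ[P] fun ω => V (X ω) - L (X ω) := by
    have hi := hV'int
    simp only [hX'eq] at hi ⊢
    refine (aux_condExp h𝒢 P _ W hWmeas hWlaw hWindep X hX _ hf hi).trans
      (Filter.Eventually.of_forall fun ω => ?_)
    simp [hV]
  have hsm : StronglyMeasurable[𝒢] (fun ω => V (X ω) - L (X ω)) := by
    have hγ : IsProbabilityMeasure (_root_.stdGaussian n) := by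
      unfold _root_.stdGaussian; infer_instance
    have h1 : StronglyMeasurable (fun x => ∫ w, V' (x + F x + (S x).mulVec w)
        ∂(_root_.stdGaussian n)) := hf.stronglyMeasurable.integral_prod_right'
    have : (fun ω => V (X ω) - L (X ω)) = (fun x => ∫ w, V' (x + F x + (S x).mulVec w)
        ∂(_root_.stdGaussian n)) ∘ X := by
      funext ω; simp [hV]
    rw [this]
    exact h1.comp_measurable hX
  set A : Ω → ℝ := fun ω => V (X ω) - L (X ω) with hA
  have hAi : Integrable A P := hVint.sub hLint
  set Q1 : Ω → ℝ := ∑ i, fun ω => Zb ω i * W ω i with hQ1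
  set Q2 : Ω → ℝ := ∑ p : Fin n × Fin n, fun ω =>
    Mb ω p.1 p.2 * (W ω p.2 * W ω p.1 - (1 : Matrix (Fin n) (Fin n) ℝ) p.2 p.1) with hQ2
  have hQ1i : Integrable Q1 P := integrable_finsetSum' _ fun i _ => (hlin i).1
  have hQ2i : Integrable Q2 P := integrable_finsetSum' _ fun p _ => (hquad p.1 p.2).1
  have hQ1c : P[Q1|𝒢] =ᵐ[P] 0 := by
    refine (condExp_finsetSum (fun i _ => (hlin i).1) 𝒢).trans ?_
    filter_upwards [ae_all_iff.2 fun i => (hlin i).2] with ω h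
    simp only [Finset.sum_apply, Pi.zero_apply]
    exact Finset.sum_eq_zero fun i _ => h i
  have hQ2c : P[Q2|𝒢] =ᵐ[P] 0 := by
    refine (condExp_finsetSum (fun p _ => (hquad p.1 p.2).1) 𝒢).trans ?_
    filter_upwards [ae_all_iff.2 fun p : Fin n × Fin n => (hquad p.1 p.2).2] with ω h
    simp only [Finset.sum_apply, Pi.zero_apply]
    exact Finset.sum_eq_zero fun i _ => h i
  set D : Ω → ℝ := (A - fun ω => V' (X' ω)) + (Q1 + (1/2 : ℝ) • Q2) with hD
  have hDi : Integrable D P := (hAi.sub hV'int).add (hQ1i.add (hQ2i.smul _))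
  have hDc : P[D|𝒢] =ᵐ[P] 0 := by
    have e1 := condExp_add (hAi.sub hV'int) (hQ1i.add (hQ2i.smul (1/2 : ℝ))) 𝒢
    have e2 := condExp_sub hAi hV'int 𝒢
    have e3 := condExp_add hQ1i (hQ2i.smul (1/2 : ℝ)) 𝒢
    have e4 := condExp_smul (μ := P) (1/2 : ℝ) Q2 𝒢
    have e5 : P[A|𝒢] = A := condExp_of_stronglyMeasurable h𝒢 hsm hAi
    filter_upwards [e1, e2, e3, e4, hQ1c, hQ2c, hcV] with ω h1 h2 h3 h4 h5 h6 h7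
    rw [h1]
    simp only [Pi.add_apply, Pi.sub_apply, Pi.smul_apply, Pi.zero_apply] at *
    rw [h2, h3, h4, h5, h6, h7, e5]
    simp
  have htr : ∀ ω, Matrix.trace (Mb ω * (Matrix.vecMulVec (W ω) (W ω) - 1)) = Q2 ω := by
    intro ω
    simp only [hQ2, Finset.sum_apply, Fintype.sum_prod_type, Matrix.trace, Matrix.diag,
      Matrix.mul_apply, Matrix.sub_apply, Matrix.vecMulVec_apply]
  have hq : ∀ ω, ∑ i, W ω i * (Mb ω).mulVec (W ω) i = Q2 ω + Matrix.trace (Mb ω) := by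
    intro ω
    rw [← htr, Matrix.mul_sub, Matrix.trace_sub, Matrix.mul_one, sub_add_cancel]
    simp only [Matrix.trace, Matrix.diag, Matrix.mul_apply, Matrix.vecMulVec_apply,
      Matrix.mulVec, dotProduct, Finset.mul_sum]
    exact Finset.sum_congr rfl fun i _ => Finset.sum_congr rfl fun j _ => by ring
  have fin : ∀ f g : Ω → ℝ, Integrable g P → f = g + D → P[f|𝒢] =ᵐ[P] P[g|𝒢] := by
    intro f g hg hfg
    rw [hfg]
    filter_upwards [condExp_add hg hDi 𝒢, hDc] with ω h1 h2
    rw [h1, Pi.add_apply, h2]; simp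
  constructor
  · refine fin _ _ hδVtint ?_
    funext ω
    simp only [hD, hA, Pi.add_apply, Pi.sub_apply, Pi.smul_apply, smul_eq_mul, hYre, hΔYh, hδVt,
      htr]
    simp only [hQ1, Finset.sum_apply]
    ring
  · refine fin _ _ (hδVtint.add hδhotint) ?_
    funext ω
    simp only [hD, hA, Pi.add_apply, Pi.sub_apply, Pi.smul_apply, smul_eq_mul, hYnl, hδhot, hδVt,
      hq]
    simp only [hQ1, Finset.sum_apply]
    ring
end

section
/- Let D : Ω → ℝⁿ be 𝒢-measurable and bounded, set Θ := exp(−½‖D‖² + ⟨D, W⟩) and Q := P.withDensity(Θ), and let δ : Ω → ℝ be a random variable with δ² P-integrable. Then, almost surely, |E_Q[δ | 𝒢]| ≤ exp(½‖D‖²) · (E_P[δ² | 𝒢])^{1/2}. -/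
open MeasureTheory ProbabilityTheory

lemma aux_gauss {n : ℕ} (d : Fin n → ℝ) :
    ∫⁻ w, ENNReal.ofReal (Real.exp (∑ i, d i * w i)) ∂(stdGaussian n)
      = ENNReal.ofReal (Real.exp ((1 / 2) * ∑ i, (d i) ^ 2)) := by
  have hexp : ∀ w : Fin n → ℝ, Real.exp (∑ i, d i * w i) = ∏ i, Real.exp (d i * w i) :=
    fun w => Real.exp_sum _ _
  simp_rw [hexp]
  rw [_root_.stdGaussian, ← ofReal_integral_eq_lintegral_ofReal]
  · rw [integral_fintype_prod_eq_prod (fun i x => Real.exp (d i * x))]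
    congr 1
    have : ∀ i, ∫ x, Real.exp (d i * x) ∂(gaussianReal 0 1) = Real.exp (d i ^ 2 / 2) := by
      intro i
      have := congrFun (mgf_fun_id_gaussianReal (μ := 0) (v := 1)) (d i)
      simpa [mgf] using this
    simp_rw [this]
    rw [← Real.exp_sum]
    congr 1
    rw [Finset.mul_sum]
    exact Finset.sum_congr rfl fun i _ => by ring
  · exact Integrable.fintype_prod (f := fun i x => Real.exp (d i * x))
      fun i => integrable_exp_mul_gaussianReal _
  · exact Filter.Eventually.of_forall fun w => Finset.prod_nonneg fun i _ => (Real.exp_pos _).le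

lemma aux_key {Ω : Type*} (𝒢 : MeasurableSpace Ω) [mΩ : MeasurableSpace Ω]
    (P : Measure Ω) [IsProbabilityMeasure P]
    {n : ℕ} (h𝒢 : 𝒢 ≤ mΩ)
    (W : Ω → Fin n → ℝ) (hWmeas : Measurable W)
    (hWlaw : Measure.map W P = stdGaussian n)
    (hWindep : Indep (MeasurableSpace.comap W inferInstance) 𝒢 P)
    (D : Ω → Fin n → ℝ) (hDmeas : Measurable[𝒢] D)
    (g : Ω → ENNReal) (hg : Measurable[𝒢] g) :
    ∫⁻ ω, g ω * ENNReal.ofReal (Real.exp (∑ i, D ω i * W ω i)) ∂P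
      = ∫⁻ ω, g ω * ENNReal.ofReal (Real.exp ((1 / 2) * ∑ i, (D ω i) ^ 2)) ∂P := by
  have hind : IndepFun (fun ω => (g ω, D ω)) W P := by
    have hm : Measurable[𝒢] (fun ω => (g ω, D ω)) := hg.prodMk hDmeas
    have := hWindep.symm
    exact indep_of_indep_of_le_left this hm.comap_le
  have hgm : Measurable g := hg.mono h𝒢 le_rfl
  have hDm : Measurable D := hDmeas.mono h𝒢 le_rfl
  have hpm : Measurable (fun ω => (g ω, D ω)) := hgm.prodMk hDm
  have hmap := hind.map_prod_eq_prod_map_map hpm.aemeasurable hWmeas.aemeasurable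
  have hprob : IsProbabilityMeasure (stdGaussian n) := by
    rw [← hWlaw]; exact Measure.isProbabilityMeasure_map hWmeas.aemeasurable
  let F : (ENNReal × (Fin n → ℝ)) × (Fin n → ℝ) → ENNReal :=
    fun p => p.1.1 * ENNReal.ofReal (Real.exp (∑ i, p.1.2 i * p.2 i))
  have hF : Measurable F := by fun_prop
  calc _ = ∫⁻ p, F p ∂(P.map (fun ω => ((g ω, D ω), W ω))) := by
        rw [lintegral_map hF (hpm.prodMk hWmeas)]
    _ = ∫⁻ q, ∫⁻ w, F (q, w) ∂(stdGaussian n) ∂(P.map (fun ω => (g ω, D ω))) := by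
        rw [hmap, hWlaw, lintegral_prod _ hF.aemeasurable]
    _ = ∫⁻ q, q.1 * ENNReal.ofReal (Real.exp ((1 / 2) * ∑ i, (q.2 i) ^ 2))
          ∂(P.map (fun ω => (g ω, D ω))) := by
        refine lintegral_congr fun q => ?_
        simp only [F]
        rw [lintegral_const_mul _ (by fun_prop), aux_gauss]
    _ = _ := by
        rw [lintegral_map (by fun_prop) hpm]

lemma aux_real (y a b : ℝ) (hb : 0 ≤ b)
    (h : ∀ t : ℚ, 0 < t → 2 * |y| ≤ t * Real.exp a + (t : ℝ)⁻¹ * b) :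
    |y| ≤ Real.exp ((1 / 2) * a) * Real.sqrt b := by
  have h' : ∀ t : ℝ, 0 < t → 2 * |y| ≤ t * Real.exp a + t⁻¹ * b := by
    intro t ht
    have hc : ContinuousAt (fun t : ℝ => t * Real.exp a + t⁻¹ * b) t := by
      have := ht.ne'
      fun_prop (disch := assumption)
    by_contra hcon
    push Not at hcon
    have hev := (hc.eventually (gt_mem_nhds hcon)).and (lt_mem_nhds ht)
    obtain ⟨l, u, hlu, hsub⟩ := mem_nhds_iff_exists_Ioo_subset.1 hev
    obtain ⟨q, hq⟩ := exists_rat_btwn (hlu.1.trans hlu.2)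
    have := hsub hq
    simp only [Set.mem_ofPred_eq] at this
    have h2 := h q (by exact_mod_cast this.2)
    linarith [this.1]
  set e := Real.exp ((1 / 2) * a) with he
  have hepos : 0 < e := Real.exp_pos _
  have hee : Real.exp a = e * e := by rw [he, ← Real.exp_add]; congr 1; ring
  set s := Real.sqrt b with hs
  have hs0 : 0 ≤ s := Real.sqrt_nonneg _
  have hbs : b = s * s := (Real.mul_self_sqrt hb).symm
  refine le_of_forall_pos_le_add fun ε hε => ?_
  have hse : 0 < s + ε / e := by positivity
  have := h' ((s + ε / e) / e) (by positivity)
  rw [hee, hbs] at this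
  have h1 : (s + ε / e) / e * (e * e) = e * s + ε := by field_simp
  have h2 : ((s + ε / e) / e)⁻¹ * (s * s) ≤ e * s := by
    rw [inv_div, div_mul_eq_mul_div, div_le_iff₀ hse]
    have : 0 ≤ ε / e := by positivity
    nlinarith [mul_nonneg (mul_nonneg hepos.le hs0) this]
  linarith

theorem drifted_bias_bound
    {Ω : Type*} (𝒢 : MeasurableSpace Ω) [mΩ : MeasurableSpace Ω]
    (P : Measure Ω) [IsProbabilityMeasure P]
    {n : ℕ} (h𝒢 : 𝒢 ≤ mΩ)
    (W : Ω → Fin n → ℝ) (hWmeas : Measurable W)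
    (hWlaw : Measure.map W P = stdGaussian n)
    (hWindep : Indep (MeasurableSpace.comap W inferInstance) 𝒢 P)
    (D : Ω → Fin n → ℝ) (hDmeas : Measurable[𝒢] D)
    (hDbound : ∃ C, ∀ ω i, |D ω i| ≤ C)
    (Θ : Ω → ℝ)
    (hΘ : ∀ ω, Θ ω = Real.exp (-(1 / 2) * (∑ i, (D ω i) ^ 2) + ∑ i, D ω i * W ω i))
    (Q : Measure Ω) (hQ : Q = P.withDensity fun ω => ENNReal.ofReal (Θ ω))
    (δ : Ω → ℝ) (hδmeas : Measurable δ)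
    (hδsq : Integrable (fun ω => (δ ω) ^ 2) P) :
    ∀ᵐ ω ∂P, |(Q[δ|𝒢]) ω| ≤
      Real.exp ((1 / 2) * ∑ i, (D ω i) ^ 2) *
        Real.sqrt ((P[fun ω => (δ ω) ^ 2|𝒢]) ω) := by
  have hDm : Measurable D := hDmeas.mono h𝒢 le_rfl
  have hΘm : Measurable Θ := by
    have : Θ = fun ω => Real.exp (-(1 / 2) * (∑ i, (D ω i) ^ 2) + ∑ i, D ω i * W ω i) :=
      funext hΘ
    rw [this]; fun_prop
  have hΘpos : ∀ ω, 0 < Θ ω := fun ω => by rw [hΘ]; exact Real.exp_pos _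
  have hNm : Measurable[𝒢] (fun ω => ∑ i, (D ω i) ^ 2) :=
    (show Measurable (fun d : Fin n → ℝ => ∑ i, (d i) ^ 2) by fun_prop).comp hDmeas
  -- set integrals of Θ
  have hQA : ∀ s, MeasurableSet[𝒢] s → Q s = P s := by
    intro s hs
    rw [hQ, withDensity_apply _ (h𝒢 s hs), ← lintegral_indicator (h𝒢 s hs)]
    have := aux_key 𝒢 P h𝒢 W hWmeas hWlaw hWindep D hDmeas
      (s.indicator fun ω => ENNReal.ofReal (Real.exp (-(1 / 2) * (∑ i, (D ω i) ^ 2))))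
      (Measurable.indicator
        ((show Measurable (fun x : ℝ => ENNReal.ofReal (Real.exp (-(1 / 2) * x))) by
          fun_prop).comp hNm) hs)
    calc _ = _ := by
          refine lintegral_congr fun ω => ?_
          by_cases h : ω ∈ s
          · simp only [h, Set.indicator_of_mem, hΘ]
            rw [Real.exp_add, ENNReal.ofReal_mul (Real.exp_pos _).le]
          · simp [h]
      _ = _ := this
      _ = ∫⁻ ω, s.indicator (fun _ => 1) ω ∂P := by
          refine lintegral_congr fun ω => ?_
          by_cases h : ω ∈ s
          · simp only [h, Set.indicator_of_mem]
            rw [← ENNReal.ofReal_mul (Real.exp_pos _).le, ← Real.exp_add]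
            ring_nf
            simp
          · simp [h]
      _ = P s := by rw [lintegral_indicator_const (h𝒢 s hs), one_mul]
  have hΘ2 : ∀ s, MeasurableSet[𝒢] s → ∫⁻ ω in s, ENNReal.ofReal (Θ ω ^ 2) ∂P
      = ∫⁻ ω in s, ENNReal.ofReal (Real.exp (∑ i, (D ω i) ^ 2)) ∂P := by
    intro s hs
    rw [← lintegral_indicator (h𝒢 s hs), ← lintegral_indicator (h𝒢 s hs)]
    have := aux_key 𝒢 P h𝒢 W hWmeas hWlaw hWindep (fun ω i => 2 * D ω i)
      ((show Measurable (fun (d : Fin n → ℝ) i => 2 * d i) by fun_prop).comp hDmeas)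
      (s.indicator fun ω => ENNReal.ofReal (Real.exp (-(∑ i, (D ω i) ^ 2))))
      (Measurable.indicator
        ((show Measurable (fun x : ℝ => ENNReal.ofReal (Real.exp (-x))) by
          fun_prop).comp hNm) hs)
    calc _ = _ := by
          refine lintegral_congr fun ω => ?_
          by_cases h : ω ∈ s
          · simp only [h, Set.indicator_of_mem, hΘ]
            rw [← ENNReal.ofReal_mul (Real.exp_pos _).le, ← Real.exp_add, ← Real.exp_nat_mul]
            congr 2
            simp only [mul_assoc, ← Finset.mul_sum]
            push_cast
            ring
          · simp [h]
      _ = _ := this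
      _ = _ := by
          refine lintegral_congr fun ω => ?_
          by_cases h : ω ∈ s
          · simp only [h, Set.indicator_of_mem]
            rw [← ENNReal.ofReal_mul (Real.exp_pos _).le, ← Real.exp_add]
            congr 2
            simp only [mul_pow, ← Finset.mul_sum]
            ring
          · simp [h]
  have hEint : Integrable (fun ω => Real.exp (∑ i, (D ω i) ^ 2)) P := by
    obtain ⟨C, hC⟩ := hDbound
    refine Integrable.of_bound (C := Real.exp (∑ i : Fin n, C ^ 2)) ?_ ?_
    · exact Measurable.aestronglyMeasurable (by fun_prop)
    · refine Filter.Eventually.of_forall fun ω => ?_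
      rw [Real.norm_eq_abs, abs_of_pos (Real.exp_pos _)]
      refine Real.exp_le_exp.2 (Finset.sum_le_sum fun i _ => ?_)
      exact sq_le_sq' (by linarith [abs_le.1 (hC ω i)]) (abs_le.1 (hC ω i)).2
  have hΘ2int : Integrable (fun ω => Θ ω ^ 2) P := by
    refine ⟨(hΘm.pow_const 2).aestronglyMeasurable, ?_⟩
    rw [hasFiniteIntegral_iff_ofReal (Filter.Eventually.of_forall fun ω => sq_nonneg _)]
    have := hΘ2 Set.univ MeasurableSet.univ
    simp only [Measure.restrict_univ] at this
    rw [this, ← hasFiniteIntegral_iff_ofReal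
      (Filter.Eventually.of_forall fun ω => (Real.exp_pos _).le)]
    exact hEint.2
  have hcond2 : (fun ω => Real.exp (∑ i, (D ω i) ^ 2)) =ᵐ[P] P[fun ω => Θ ω ^ 2|𝒢] := by
    refine ae_eq_condExp_of_forall_setIntegral_eq h𝒢 hΘ2int (fun s _ _ => hEint.integrableOn) ?_ ?_
    · intro s hs _
      rw [integral_eq_lintegral_of_nonneg_ae
        (Filter.Eventually.of_forall fun ω => (Real.exp_pos _).le) hEint.1.restrict,
        integral_eq_lintegral_of_nonneg_ae
        (Filter.Eventually.of_forall fun ω => sq_nonneg _) hΘ2int.1.restrict, hΘ2 s hs]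
    · exact (Real.measurable_exp.comp hNm).stronglyMeasurable.aestronglyMeasurable
  have hΘδ : Integrable (fun ω => Θ ω * δ ω) P := by
    have h1 : MemLp Θ 2 P := (memLp_two_iff_integrable_sq hΘm.aestronglyMeasurable).2 hΘ2int
    have h2 : MemLp δ 2 P := (memLp_two_iff_integrable_sq hδmeas.aestronglyMeasurable).2 hδsq
    exact h1.integrable_mul h2
  have hQprob : IsProbabilityMeasure Q := ⟨by rw [hQA _ MeasurableSet.univ]; simp⟩
  have htrim : Q.trim h𝒢 = P.trim h𝒢 := by
    refine @Measure.ext _ 𝒢 _ _ fun s hs => ?_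
    rw [trim_measurableSet_eq h𝒢 hs, trim_measurableSet_eq h𝒢 hs, hQA s hs]
  have hQset : ∀ s, MeasurableSet s → ∫ ω in s, δ ω ∂Q = ∫ ω in s, Θ ω * δ ω ∂P := by
    intro s hs
    rw [hQ, setIntegral_withDensity_eq_setIntegral_toReal_smul (by fun_prop) (by simp) _ hs]
    refine integral_congr_ae (Filter.Eventually.of_forall fun ω => ?_)
    simp [ENNReal.toReal_ofReal (hΘpos ω).le]
  have hδQ : Integrable δ Q := by
    rw [hQ, integrable_withDensity_iff (by fun_prop) (by simp)]
    refine hΘδ.congr (Filter.Eventually.of_forall fun ω => ?_)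
    simp [ENNReal.toReal_ofReal (hΘpos ω).le, mul_comm]
  have hYm : StronglyMeasurable[𝒢] (Q[δ|𝒢]) := stronglyMeasurable_condExp
  have hYP : Integrable (Q[δ|𝒢]) P := by
    have h1 : Integrable (Q[δ|𝒢]) Q := integrable_condExp
    have h2 := h1.trim h𝒢 hYm
    rw [htrim] at h2
    exact integrable_of_integrable_trim h𝒢 h2
  have hY : Q[δ|𝒢] =ᵐ[P] P[fun ω => Θ ω * δ ω|𝒢] := by
    refine ae_eq_condExp_of_forall_setIntegral_eq h𝒢 hΘδ (fun s _ _ => hYP.integrableOn) ?_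
      hYm.aestronglyMeasurable
    intro s hs _
    rw [← hQset s (h𝒢 s hs), ← setIntegral_condExp h𝒢 hδQ hs, setIntegral_trim h𝒢 hYm hs,
      setIntegral_trim h𝒢 hYm hs, htrim]
  have hb : ∀ᵐ ω ∂P, 0 ≤ (P[fun ω => (δ ω) ^ 2|𝒢]) ω :=
    condExp_nonneg (Filter.Eventually.of_forall fun ω => sq_nonneg _)
  have hyoung : ∀ᵐ ω ∂P, ∀ t : ℚ, 0 < t → 2 * |(P[fun ω => Θ ω * δ ω|𝒢]) ω| ≤
      t * (P[fun ω => Θ ω ^ 2|𝒢]) ω + (t : ℝ)⁻¹ * (P[fun ω => (δ ω) ^ 2|𝒢]) ω := by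
    rw [ae_all_iff]
    intro t
    by_cases ht : 0 < t
    swap
    · exact Filter.Eventually.of_forall fun ω h => absurd h ht
    have htR : (0 : ℝ) < t := by exact_mod_cast ht
    have hi : Integrable ((t : ℝ) • (fun ω => Θ ω ^ 2) + (t : ℝ)⁻¹ • (fun ω => δ ω ^ 2)) P :=
      (hΘ2int.smul _).add (hδsq.smul _)
    have hpt : ∀ x y : ℝ, 0 ≤ t * x ^ 2 + (t : ℝ)⁻¹ * y ^ 2 - 2 * (x * y) := by
      intro x y
      have : t * x ^ 2 + (t : ℝ)⁻¹ * y ^ 2 - 2 * (x * y) = (t : ℝ)⁻¹ * (t * x - y) ^ 2 := by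
        field_simp
        ring
      rw [this]; positivity
    have e1 := condExp_mono (m := 𝒢) (hΘδ.smul (2 : ℝ)) hi
      (Filter.Eventually.of_forall fun ω => by
        have := hpt (Θ ω) (δ ω)
        simp only [Pi.smul_apply, Pi.add_apply, smul_eq_mul]
        linarith)
    have e2 := condExp_mono (m := 𝒢) (hΘδ.smul (-2 : ℝ)) hi
      (Filter.Eventually.of_forall fun ω => by
        have := hpt (Θ ω) (-δ ω)
        rw [neg_sq] at this
        simp only [Pi.smul_apply, Pi.add_apply, smul_eq_mul]
        linarith)
    filter_upwards [e1, e2, condExp_smul (μ := P) (2 : ℝ) (fun ω => Θ ω * δ ω) 𝒢,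
      condExp_smul (μ := P) (-2 : ℝ) (fun ω => Θ ω * δ ω) 𝒢,
      condExp_smul (μ := P) (t : ℝ) (fun ω => Θ ω ^ 2) 𝒢,
      condExp_smul (μ := P) (t : ℝ)⁻¹ (fun ω => δ ω ^ 2) 𝒢,
      condExp_add (hΘ2int.smul (t : ℝ)) (hδsq.smul (t : ℝ)⁻¹) 𝒢]
      with ω h1 h2 h3 h4 h5 h6 h7 _
    simp only [Pi.smul_apply, Pi.add_apply, smul_eq_mul] at h3 h4 h5 h6 h7
    rw [h3, h7, h5, h6] at h1
    rw [h4, h7, h5, h6] at h2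
    rcases abs_cases ((P[fun ω => Θ ω * δ ω|𝒢]) ω) with h | h <;> rw [h.1] <;> linarith
  filter_upwards [hY, hb, hyoung, hcond2] with ω h1 h2 h3 h4
  rw [h1]
  refine aux_real _ _ _ h2 ?_
  rw [← h4] at h3
  exact h3
end
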